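/- The smoothed M³N objective is a loss-rescaled CRF objective. Assume ℓⁱ_{yⁱ} = 0 for all i. For every μ > 0 and w ∈ ℝ^p, J_μ(w) := (λ/2)‖w‖² + sup_{α∈Sⁿ}{⟨Aw, α⟩ − g(α) − μ d(α)} = (λ/2)‖w‖² − (μ/n) Σ_{i=1}^n log p(yⁱ | xⁱ; w) − μ log|𝒴|, where p(y | xⁱ; w) = exp((ℓⁱ_y + ⟨w, φ(xⁱ, y)⟩)/μ) / Σ_{y'∈𝒴} exp((ℓⁱ_{y'} + ⟨w, φ(xⁱ, y')⟩)/μ). -/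

import Mathlib

open scoped RealInnerProductSpace BigOperators

/-- The simplex-product `Sⁿ = {α ∈ [0,1]^{n|𝒴|} : Σ_y αⁱ_y = 1/n for each i}`. -/
def simplexSn (n : ℕ) (Y : Type*) [Fintype Y] : Set (Fin n → Y → ℝ) :=
  {a | (∀ i y, a i y ∈ Set.Icc (0 : ℝ) 1) ∧ ∀ i, ∑ y, a i y = 1 / n}

/-!
Absorbing the losses into the linear term, the supremum over `Sⁿ` splits into one
entropy-regularised linear programme per training pair, with payoff
`cⁱ_y = ℓⁱ_y − ⟨ψⁱ_y, w⟩` and total mass `t = 1/n`. By the log-sum inequality each of them has value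
`μ t log (t⁻¹ Σ_y exp (cⁱ_y / μ))`, attained at the Gibbs weights; the contributions of `t` cancel
the `log n` in `d`. Since `ℓⁱ_{yⁱ} = 0`, the payoff `cⁱ_y` is the difference between the CRF scores
of `y` and `yⁱ`, so `log Σ_y exp (cⁱ_y / μ) = −log p(yⁱ | xⁱ; w)`.
-/

open Finset Real

theorem sum_mul_log_sum_div_sum_le {ι : Type*} {s : Finset ι} {a b : ι → ℝ}
    (ha : ∀ i ∈ s, 0 ≤ a i) (hb : ∀ i ∈ s, 0 < b i) :
    (∑ i ∈ s, a i) * log ((∑ i ∈ s, a i) / ∑ i ∈ s, b i) ≤ ∑ i ∈ s, a i * log (a i / b i) := by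
  rcases s.eq_empty_or_nonempty with rfl | hs
  · simp
  have hB : 0 < ∑ i ∈ s, b i := sum_pos hb hs
  have mean_ratio : s.centerMass b (fun i => a i / b i) = (∑ i ∈ s, a i) / ∑ i ∈ s, b i := by
    rw [centerMass, smul_eq_mul, inv_mul_eq_div]
    exact congrArg (· / _) (sum_congr rfl fun i hi => mul_div_cancel₀ _ (hb i hi).ne')
  have mean_mul_log : s.centerMass b (fun i => a i / b i * log (a i / b i)) =
      (∑ i ∈ s, a i * log (a i / b i)) / ∑ i ∈ s, b i := by
    rw [centerMass, smul_eq_mul, inv_mul_eq_div]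
    refine congrArg (· / _) (sum_congr rfl fun i hi => ?_)
    rw [smul_eq_mul, ← mul_assoc, mul_div_cancel₀ _ (hb i hi).ne']
  have jensen := convexOn_mul_log.map_centerMass_le (fun i hi => (hb i hi).le) hB
    (fun i hi => Set.mem_Ici.2 (div_nonneg (ha i hi) (hb i hi).le))
  rw [Function.comp_def, mean_ratio, mean_mul_log, div_mul_eq_mul_div] at jensen
  exact (div_le_div_iff_of_pos_right hB).1 jensen

theorem isGreatest_image_sum_univ_pi {ι M : Type*} [Fintype ι] [AddCommMonoid M] [Preorder M]
    [AddLeftMono M] {X : ι → Type*} {S : ∀ i, Set (X i)} {f : ∀ i, X i → M} {m : ι → M}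
    (h : ∀ i, IsGreatest (f i '' S i) (m i)) :
    IsGreatest ((fun x : ∀ i, X i => ∑ i, f i (x i)) '' Set.univ.pi S) (∑ i, m i) := by
  choose x hxS hxm using fun i => (h i).1
  refine ⟨⟨x, fun i _ => hxS i, sum_congr rfl fun i _ => hxm i⟩, ?_⟩
  rintro _ ⟨z, hz, rfl⟩
  exact sum_le_sum fun i _ => (h i).2 ⟨z i, hz i trivial, rfl⟩

theorem log_exp_div_sum_exp {Y : Type*} [Fintype Y] (s : Y → ℝ) (y : Y) :
    log (exp (s y) / ∑ y', exp (s y')) = -log (∑ y', exp (s y' - s y)) := by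
  simp only [exp_sub, ← sum_div, ← log_inv, inv_div]

theorem sum_mul_log_div_one_div_natCast {n : ℕ} [NeZero n] (μ : ℝ) {Z : Fin n → ℝ}
    (hZ : ∀ i, Z i ≠ 0) :
    ∑ i, μ * (1 / n) * log (Z i / (1 / n)) = μ / n * ∑ i, log (Z i) + μ * log n := by
  have hn : (n : ℝ) ≠ 0 := NeZero.ne _
  have log_scaled (i : Fin n) : log (Z i / (1 / n)) = log (Z i) + log n := by
    rw [div_div_eq_mul_div, div_one, log_mul (hZ i) hn]
  simp only [log_scaled, ← mul_sum, sum_add_distrib, sum_const, card_univ, Fintype.card_fin,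
    nsmul_eq_mul]
  field_simp

section Entropic

variable {Y : Type*} [Fintype Y]

/-- The nonnegative weights on `Y` of total mass `t`; for `t = 1` this is `stdSimplex ℝ Y`. -/
def massSimplex (Y : Type*) [Fintype Y] (t : ℝ) : Set (Y → ℝ) :=
  {a | (∀ y, 0 ≤ a y) ∧ ∑ y, a y = t}

/-- The linear payoff `⟨c, a⟩` penalised by `μ` times the negative entropy of `a`. -/
noncomputable def entropicPayoff (μ : ℝ) (c a : Y → ℝ) : ℝ :=
  ∑ y, a y * c y - μ * ∑ y, a y * log (a y)

/-- The Gibbs weights of total mass `t` for the payoff `c` at temperature `μ`: the maximiser of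
`entropicPayoff μ c` on `massSimplex Y t`. -/
noncomputable def gibbsWeights (μ t : ℝ) (c : Y → ℝ) (y : Y) : ℝ :=
  t / (∑ y', exp (c y' / μ)) * exp (c y / μ)

theorem sum_gibbsWeights [Nonempty Y] (μ t : ℝ) (c : Y → ℝ) : ∑ y, gibbsWeights μ t c y = t := by
  have hZ : 0 < ∑ y, exp (c y / μ) := sum_pos (fun y _ => exp_pos _) univ_nonempty
  simp only [gibbsWeights]
  rw [← mul_sum, div_mul_cancel₀ _ hZ.ne']

theorem gibbsWeights_mem_massSimplex [Nonempty Y] (μ : ℝ) {t : ℝ} (ht : 0 ≤ t) (c : Y → ℝ) :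
    gibbsWeights μ t c ∈ massSimplex Y t :=
  ⟨fun y => by unfold gibbsWeights; positivity, sum_gibbsWeights μ t c⟩

theorem entropicPayoff_eq_neg_mul_sum_mul_log_div {μ : ℝ} (hμ : μ ≠ 0) (c a : Y → ℝ) :
    entropicPayoff μ c a = -(μ * ∑ y, a y * log (a y / exp (c y / μ))) := by
  have log_ratio (y : Y) :
      a y * log (a y / exp (c y / μ)) = a y * log (a y) - a y * c y / μ := by
    rcases eq_or_ne (a y) 0 with h | h
    · simp [h]
    · rw [log_div h (exp_ne_zero _), log_exp]
      ring
  simp only [entropicPayoff, log_ratio, sum_sub_distrib, ← sum_div]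
  field_simp
  ring

theorem entropicPayoff_le {μ t : ℝ} (hμ : 0 < μ) (c : Y → ℝ) {a : Y → ℝ}
    (ha : a ∈ massSimplex Y t) :
    entropicPayoff μ c a ≤ μ * t * log ((∑ y, exp (c y / μ)) / t) := by
  obtain ⟨ha_nonneg, rfl⟩ := ha
  rw [entropicPayoff_eq_neg_mul_sum_mul_log_div hμ.ne', ← inv_div, log_inv, mul_neg, mul_assoc]
  gcongr
  exact sum_mul_log_sum_div_sum_le (fun y _ => ha_nonneg y) fun y _ => exp_pos _

theorem entropicPayoff_gibbsWeights [Nonempty Y] {μ : ℝ} (hμ : μ ≠ 0) (t : ℝ) (c : Y → ℝ) :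
    entropicPayoff μ c (gibbsWeights μ t c) = μ * t * log ((∑ y, exp (c y / μ)) / t) := by
  have constant_ratio (y : Y) :
      gibbsWeights μ t c y / exp (c y / μ) = t / ∑ y', exp (c y' / μ) :=
    mul_div_cancel_right₀ _ (exp_ne_zero _)
  rw [entropicPayoff_eq_neg_mul_sum_mul_log_div hμ]
  simp only [constant_ratio]
  rw [← sum_mul, sum_gibbsWeights, ← inv_div, log_inv]
  ring

theorem isGreatest_entropicPayoff [Nonempty Y] {μ t : ℝ} (hμ : 0 < μ) (ht : 0 ≤ t) (c : Y → ℝ) :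
    IsGreatest (entropicPayoff μ c '' massSimplex Y t)
      (μ * t * log ((∑ y, exp (c y / μ)) / t)) :=
  ⟨⟨_, gibbsWeights_mem_massSimplex μ ht c, entropicPayoff_gibbsWeights hμ.ne' t c⟩,
    Set.forall_mem_image.2 fun _ ha => entropicPayoff_le hμ c ha⟩

theorem simplexSn_eq_pi_massSimplex (n : ℕ) :
    simplexSn n Y = Set.univ.pi fun _ => massSimplex Y (1 / n) := by
  ext a
  refine ⟨fun ha i _ => ⟨fun y => (ha.1 i y).1, ha.2 i⟩, fun ha => ?_⟩
  refine ⟨fun i y => ⟨(ha i trivial).1 y, ?_⟩, fun i => (ha i trivial).2⟩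
  calc a i y ≤ ∑ y, a i y := single_le_sum (fun y _ => (ha i trivial).1 y) (mem_univ y)
    _ = 1 / n := (ha i trivial).2
    _ ≤ 1 := by simpa only [one_div] using Nat.cast_inv_le_one n

end Entropic

section SmoothedM3N

variable {Y E : Type*} [SeminormedAddCommGroup E] [InnerProductSpace ℝ E]

/-- The loss-augmented margin violation `ℓⁱ_y − ⟨ψⁱ_y, w⟩`, which is the coefficient of `αⁱ_y` in
`⟨Aw, α⟩ − g(α)`. -/
def marginViolation {ι : Type*} (φ : ι → Y → E) (yi : ι → Y) (ℓ : ι → Y → ℝ) (w : E)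
    (i : ι) (y : Y) : ℝ :=
  ℓ i y - ⟪φ i (yi i) - φ i y, w⟫

theorem marginViolation_eq_sub {ι : Type*} (φ : ι → Y → E) {yi : ι → Y} {ℓ : ι → Y → ℝ} (w : E)
    {i : ι} (hℓ0 : ℓ i (yi i) = 0) (y : Y) :
    marginViolation φ yi ℓ w i y =
      (ℓ i y + ⟪w, φ i y⟫) - (ℓ i (yi i) + ⟪w, φ i (yi i)⟫) := by
  rw [marginViolation, inner_sub_left, real_inner_comm w, real_inner_comm w, hℓ0]
  ring

variable [Fintype Y]

theorem log_crf_eq_neg_log_sum_exp_marginViolation {ι : Type*} (φ : ι → Y → E) {yi : ι → Y}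
    {ℓ : ι → Y → ℝ} (μ : ℝ) (w : E) {i : ι} (hℓ0 : ℓ i (yi i) = 0) :
    log (exp ((ℓ i (yi i) + ⟪w, φ i (yi i)⟫) / μ) / ∑ y, exp ((ℓ i y + ⟪w, φ i y⟫) / μ)) =
      -log (∑ y, exp (marginViolation φ yi ℓ w i y / μ)) := by
  simp only [marginViolation_eq_sub φ w hℓ0, sub_div]
  exact log_exp_div_sum_exp (fun y => (ℓ i y + ⟪w, φ i y⟫) / μ) (yi i)

variable {n : ℕ} (φ : Fin n → Y → E) (yi : Fin n → Y) (ℓ : Fin n → Y → ℝ) (μ : ℝ) (w : E)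

/-- The function `α ↦ ⟨Aw, α⟩ − g(α) − μ d(α)` whose supremum over `Sⁿ` is the smoothed
empirical risk. -/
noncomputable def smoothedDual (a : Fin n → Y → ℝ) : ℝ :=
  (∑ i, ∑ y, a i y * (-⟪φ i (yi i) - φ i y, w⟫)) - (-(∑ i, ∑ y, ℓ i y * a i y)) -
    μ * ((∑ i, ∑ y, a i y * log (a i y)) + log n + log (Fintype.card Y))

theorem smoothedDual_eq_sum_entropicPayoff (a : Fin n → Y → ℝ) :
    smoothedDual φ yi ℓ μ w a =
      ∑ i, entropicPayoff μ (marginViolation φ yi ℓ w i) (a i) -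
        μ * (log n + log (Fintype.card Y)) := by
  have linear_part : ∑ i, ∑ y, a i y * marginViolation φ yi ℓ w i y =
      (∑ i, ∑ y, a i y * (-⟪φ i (yi i) - φ i y, w⟫)) + ∑ i, ∑ y, ℓ i y * a i y := by
    simp only [← sum_add_distrib]
    refine sum_congr rfl fun i _ => sum_congr rfl fun y _ => ?_
    rw [marginViolation]
    ring
  simp only [smoothedDual, entropicPayoff]
  rw [sum_sub_distrib, linear_part, ← mul_sum]
  ring

variable {μ}

theorem isGreatest_smoothedDual [NeZero n] (hμ : 0 < μ) :
    IsGreatest (smoothedDual φ yi ℓ μ w '' simplexSn n Y)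
      (μ / n * ∑ i, log (∑ y, exp (marginViolation φ yi ℓ w i y / μ)) -
        μ * log (Fintype.card Y)) := by
  have : Nonempty Y := ⟨yi 0⟩
  have partition_ne_zero (i : Fin n) : ∑ y, exp (marginViolation φ yi ℓ w i y / μ) ≠ 0 :=
    (sum_pos (fun y _ => exp_pos _) univ_nonempty).ne'
  have separable := isGreatest_image_sum_univ_pi fun i =>
    isGreatest_entropicPayoff hμ (by positivity : (0 : ℝ) ≤ 1 / n) (marginViolation φ yi ℓ w i)
  have shifted := Monotone.map_isGreatest
    (f := fun x => x - μ * (log n + log (Fintype.card Y))) (fun _ _ h => sub_le_sub_right h _)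
    separable
  simp only [Set.image_image, ← smoothedDual_eq_sum_entropicPayoff,
    ← simplexSn_eq_pi_massSimplex, sum_mul_log_div_one_div_natCast μ partition_ne_zero] at shifted
  rwa [mul_add, sub_add_eq_sub_sub, add_sub_cancel_right] at shifted

end SmoothedM3N

theorem smoothed_m3n_is_crf_general {n : ℕ} [NeZero n] {Y E : Type*} [Fintype Y]
    [SeminormedAddCommGroup E] [InnerProductSpace ℝ E] (φ : Fin n → Y → E) (yi : Fin n → Y)
    (ℓ : Fin n → Y → ℝ) (hℓ0 : ∀ i, ℓ i (yi i) = 0) (lam : ℝ) {μ : ℝ} (hμ : 0 < μ) (w : E) :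
    lam / 2 * ‖w‖ ^ 2 +
      sSup ((fun a : Fin n → Y → ℝ =>
        (∑ i, ∑ y, a i y * (-⟪φ i (yi i) - φ i y, w⟫)) -
          (-(∑ i, ∑ y, ℓ i y * a i y)) -
          μ * ((∑ i, ∑ y, a i y * log (a i y)) + log n + log (Fintype.card Y))) ''
            simplexSn n Y)
    = lam / 2 * ‖w‖ ^ 2 -
        μ / n * ∑ i, log
          (exp ((ℓ i (yi i) + ⟪w, φ i (yi i)⟫) / μ) / ∑ y', exp ((ℓ i y' + ⟪w, φ i y'⟫) / μ)) -
        μ * log (Fintype.card Y) := by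
  have sup_eq := (isGreatest_smoothedDual φ yi ℓ w hμ).csSup_eq
  unfold smoothedDual at sup_eq
  simp only [sup_eq, log_crf_eq_neg_log_sum_exp_marginViolation φ μ w (hℓ0 _), sum_neg_distrib]
  ring

/-- **The smoothed M³N objective is a loss-rescaled CRF objective.**
Assume `ℓⁱ_{yⁱ} = 0` for all `i`.  For every `μ > 0` and `w ∈ ℝ^p`,
`J_μ(w) := (λ/2)‖w‖² + sup_{α∈Sⁿ}{⟨Aw, α⟩ − g(α) − μ d(α)}
  = (λ/2)‖w‖² − (μ/n) Σᵢ log p(yⁱ | xⁱ; w) − μ log|𝒴|`,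
where `p(y | xⁱ; w) = exp((ℓⁱ_y + ⟨w, φ(xⁱ,y)⟩)/μ) / Σ_{y'} exp((ℓⁱ_{y'} + ⟨w, φ(xⁱ,y')⟩)/μ)`,
`⟨Aw, α⟩ = Σᵢ Σ_y αⁱ_y ⬝ (−⟨ψⁱ_y, w⟩)` with `ψⁱ_y = φ(xⁱ,yⁱ) − φ(xⁱ,y)`,
`g(α) = −Σᵢ Σ_y ℓⁱ_y αⁱ_y`, and `d(α) = Σᵢ Σ_y αⁱ_y log αⁱ_y + log n + log|𝒴|`. -/
theorem smoothed_m3n_is_crf {n p : ℕ} [NeZero n] {Y : Type*} [Fintype Y] [Nonempty Y]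
    (φ : Fin n → Y → EuclideanSpace ℝ (Fin p)) (yi : Fin n → Y)
    (ℓ : Fin n → Y → ℝ) (hℓ0 : ∀ i, ℓ i (yi i) = 0)
    (lam : ℝ) (hlam : 0 < lam)
    (μ : ℝ) (hμ : 0 < μ) (w : EuclideanSpace ℝ (Fin p)) :
    lam / 2 * ‖w‖ ^ 2 +
      sSup ((fun a : Fin n → Y → ℝ =>
        (∑ i, ∑ y, a i y * (-⟪φ i (yi i) - φ i y, w⟫)) -
          (-(∑ i, ∑ y, ℓ i y * a i y)) -
          μ * ((∑ i, ∑ y, a i y * Real.log (a i y)) +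
                Real.log n + Real.log (Fintype.card Y))) '' simplexSn n Y)
    = lam / 2 * ‖w‖ ^ 2 -
        μ / n * ∑ i, Real.log
          (Real.exp ((ℓ i (yi i) + ⟪w, φ i (yi i)⟫) / μ) /
            ∑ y', Real.exp ((ℓ i y' + ⟪w, φ i y'⟫) / μ)) -
        μ * Real.log (Fintype.card Y) :=
  smoothed_m3n_is_crf_general φ yi ℓ hℓ0 lam hμ w
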